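/- arXiv:2301.02014 — 5 statements merged into one kernel-verified Lean document; each statement's English description precedes it below -/
import Mathlib

section
/- Fix an integer k ≥ 1 and C = (c_0,…,c_k) with each c_p ∈ {0,1}. For every n ≥ 1 and every integer m with 1 ≤ m ≤ n, O_C(n, m + c_k − 1) = ((n−1)!)^k · Σ_T (Π_{j∈T} F_j(C)) · (Π_{j∈{2,…,n}∖T} F_j(C′)), where the sum ranges over all subsets T of {2,…,n} with |T| = m − 1. -/
open Finset

/-- `i` is a left-to-right minimum of the permutation `σ`. -/
def IsLTRMin {n : ℕ} (σ : Equiv.Perm (Fin n)) (i : Fin n) : Prop :=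
  ∀ i' : Fin n, i' < i → σ i < σ i'

instance {n : ℕ} (σ : Equiv.Perm (Fin n)) : DecidablePred (IsLTRMin σ) := fun i =>
  inferInstanceAs (Decidable (∀ i' : Fin n, i' < i → σ i < σ i'))

/-- `l(i)`: the number of `w` such that `i` is a left-to-right minimum of `σs w`. -/
def ltrCount {n k : ℕ} (σs : Fin k → Equiv.Perm (Fin n)) (i : Fin n) : ℕ :=
  (univ.filter fun w => IsLTRMin (σs w) i).card

/-- `O_C(n, m)`: the number of `k`-tuples of permutations of `{1,…,n}` such that exactly `m`
indices `i` satisfy `c (l i) = 1`. -/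
def Oseq (k : ℕ) (c : ℕ → ℕ) (n m : ℕ) : ℕ :=
  ((univ : Finset (Fin k → Equiv.Perm (Fin n))).filter fun σs =>
    (univ.filter fun i : Fin n => c (ltrCount σs i) = 1).card = m).card

/-- `F_j(C) = ∑_{p=0}^k c_p · binom(k,p) / (j-1)^p`. -/
noncomputable def Fc (k : ℕ) (c : ℕ → ℕ) (j : ℕ) : ℝ :=
  ∑ p ∈ Finset.range (k + 1), (c p : ℝ) * (k.choose p : ℝ) / ((j - 1 : ℕ) : ℝ) ^ p

open Polynomial in
/-- generating polynomial -/
noncomputable def genP (k : ℕ) (c : ℕ → ℕ) (n : ℕ) : ℝ[X] :=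
  ∑ σs : Fin k → Equiv.Perm (Fin n), X ^ (univ.filter fun i : Fin n => c (ltrCount σs i) = 1).card

lemma genP_coeff (k : ℕ) (c : ℕ → ℕ) (n m : ℕ) : (genP k c n).coeff m = (Oseq k c n m : ℝ) := by
  unfold genP Oseq
  rw [Polynomial.finsetSum_coeff, Finset.card_filter]
  push_cast
  refine Finset.sum_congr rfl fun σs _ => ?_
  rw [Polynomial.coeff_X_pow]
  simp only [eq_comm]

/-- insertion of a last value -/
def insP {n : ℕ} (q : Fin (n + 1) × Equiv.Perm (Fin n)) : Equiv.Perm (Fin (n + 1)) :=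
  ((finSuccEquiv' (Fin.last n)).trans (Equiv.optionCongr q.2)).trans (finSuccEquiv' q.1).symm

lemma insP_last {n : ℕ} (q : Fin (n + 1) × Equiv.Perm (Fin n)) : insP q (Fin.last n) = q.1 := by
  simp [insP]

lemma insP_castSucc {n : ℕ} (q : Fin (n + 1) × Equiv.Perm (Fin n)) (i : Fin n) :
    insP q i.castSucc = q.1.succAbove (q.2 i) := by
  have := finSuccEquiv'_succAbove (Fin.last n) i
  rw [Fin.succAbove_last] at this
  simp [insP, this]

lemma insP_bij (n : ℕ) : Function.Bijective (insP (n := n)) := by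
  rw [Fintype.bijective_iff_injective_and_card]
  constructor
  · rintro ⟨a, τ⟩ ⟨b, τ'⟩ h
    have h1 : a = b := by
      have := congrArg (fun e => e (Fin.last n)) h
      simpa [insP_last] using this
    subst h1
    congr 1
    ext i
    have := congrArg (fun e => e i.castSucc) h
    simp only [insP_castSucc] at this
    rw [Fin.succAbove_right_injective this]
  · simp [Fintype.card_perm, Nat.factorial_succ]

lemma insP_ltr_castSucc {n : ℕ} (q : Fin (n + 1) × Equiv.Perm (Fin n)) (i : Fin n) :
    IsLTRMin (insP q) i.castSucc ↔ IsLTRMin q.2 i := by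
  unfold IsLTRMin
  constructor
  · intro h i' hi
    have := h i'.castSucc (by simpa using hi)
    rw [insP_castSucc, insP_castSucc, Fin.succAbove_lt_succAbove_iff] at this
    exact this
  · intro h i' hi
    induction i' using Fin.lastCases with
    | last => exact absurd hi (by simp [Fin.le_last])
    | cast j =>
      rw [insP_castSucc, insP_castSucc, Fin.succAbove_lt_succAbove_iff]
      exact h j (by simpa using hi)

lemma insP_ltr_last {n : ℕ} (q : Fin (n + 1) × Equiv.Perm (Fin n)) :
    IsLTRMin (insP q) (Fin.last n) ↔ q.1 = 0 := by
  unfold IsLTRMin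
  rw [insP_last]
  constructor
  · intro h
    by_contra h0
    obtain ⟨x, hx⟩ := (insP q).surjective 0
    have hxl : x ≠ Fin.last n := by
      rintro rfl
      rw [insP_last] at hx
      exact h0 hx
    have := h x (Fin.lt_last_iff_ne_last.2 hxl)
    rw [hx] at this
    exact absurd this (by simp)
  · intro h i' hi
    rw [h]
    refine Fin.pos_iff_ne_zero.2 fun h0 => ?_
    rw [← h, ← insP_last q] at h0
    exact hi.ne ((insP q).injective h0)

open Polynomial in
lemma card_zero (k n p : ℕ) :
    ((univ.filter fun a : Fin k → Fin (n + 1) =>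
      (univ.filter fun w => a w = 0).card = p).card : ℝ) = (n : ℝ) ^ (k - p) * (k.choose p : ℝ) := by
  have key : ∑ a : Fin k → Fin (n + 1), (X : ℝ[X]) ^ (univ.filter fun w => a w = 0).card
      = (X + C (n : ℝ)) ^ k := by
    have h1 : ∀ a : Fin k → Fin (n + 1), (X : ℝ[X]) ^ (univ.filter fun w => a w = 0).card
        = ∏ w, (if a w = 0 then X else 1) := by
      intro a
      rw [Finset.prod_ite]
      simp
    simp_rw [h1]
    rw [← Fintype.piFinset_univ, ← Finset.prod_univ_sum (fun _ => univ)
      (fun (_ : Fin k) (x : Fin (n + 1)) => if x = 0 then (X : ℝ[X]) else 1)]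
    simp [Fin.sum_univ_succ]
  have := congrArg (fun q => q.coeff p) key
  simp only [Polynomial.coeff_X_add_C_pow, Polynomial.finsetSum_coeff, Polynomial.coeff_X_pow] at this
  rw [← this, Finset.card_filter]
  push_cast
  simp only [eq_comm]

open Polynomial in
lemma sum_zero (k n : ℕ) (hn : n ≠ 0) (c : ℕ → ℕ) (hc : ∀ p ≤ k, c p = 0 ∨ c p = 1) :
    ∑ a : Fin k → Fin (n + 1), (X : ℝ[X]) ^ (if c (univ.filter fun w => a w = 0).card = 1 then 1 else 0)
      = C ((n : ℝ) ^ k) * (C (Fc k c (n + 1)) * X + C (Fc k (fun p => 1 - c p) (n + 1))) := by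
  rw [← Finset.sum_fiberwise_of_maps_to (s := univ) (t := Finset.range (k + 1))
    (g := fun a : Fin k → Fin (n + 1) => (univ.filter fun w => a w = 0).card)]
  · have hn' : (n : ℝ) ≠ 0 := by exact_mod_cast hn
    simp only [Fc, map_sum, Finset.sum_mul, ← Finset.sum_add_distrib, Finset.mul_sum]
    refine Finset.sum_congr rfl fun p hp => ?_
    have hpk : p ≤ k := by simpa [Nat.lt_succ_iff] using hp
    have : ∀ a ∈ univ.filter (fun a : Fin k → Fin (n + 1) =>
        (univ.filter fun w => a w = 0).card = p),
        (X : ℝ[X]) ^ (if c (univ.filter fun w => a w = 0).card = 1 then 1 else 0)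
        = X ^ (if c p = 1 then 1 else 0) := by
      intro a ha
      rw [(Finset.mem_filter.1 ha).2]
    rw [Finset.sum_congr rfl this, Finset.sum_const, nsmul_eq_mul]
    have h2 : (((univ.filter fun a : Fin k → Fin (n + 1) =>
      (univ.filter fun w => a w = 0).card = p).card : ℕ) : ℝ[X])
        = C ((n : ℝ) ^ (k - p) * (k.choose p : ℝ)) := by
      rw [← card_zero]; simp
    have h3 : (n : ℝ) ^ (k - p) * (k.choose p : ℝ) = (n : ℝ) ^ k * ((k.choose p : ℝ) / (n : ℝ) ^ p) := by
      rw [pow_sub₀ _ hn' hpk]; ring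
    rw [h2, h3]
    rcases hc p hpk with h | h <;> simp [h] <;> ring
  · intro a _
    simp only [Finset.mem_range, Nat.lt_succ_iff]
    exact (Finset.card_le_univ _).trans (by simp)

lemma count_step {k n : ℕ} (c : ℕ → ℕ) (a : Fin k → Fin (n + 1)) (τ : Fin k → Equiv.Perm (Fin n)) :
    (univ.filter fun i : Fin (n + 1) => c (ltrCount (fun w => insP (a w, τ w)) i) = 1).card
      = (univ.filter fun i : Fin n => c (ltrCount τ i) = 1).card +
        (if c (univ.filter fun w => a w = 0).card = 1 then 1 else 0) := by
  rw [Finset.card_filter, Finset.card_filter, Fin.sum_univ_castSucc]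
  simp only [ltrCount, insP_ltr_castSucc, insP_ltr_last]
  congr!

open Polynomial in
lemma genP_succ (k n : ℕ) (hn : n ≠ 0) (c : ℕ → ℕ) (hc : ∀ p ≤ k, c p = 0 ∨ c p = 1) :
    genP k c (n + 1) = genP k c n *
      (C ((n : ℝ) ^ k) * (C (Fc k c (n + 1)) * X + C (Fc k (fun p => 1 - c p) (n + 1)))) := by
  rw [← sum_zero k n hn c hc]
  unfold genP
  rw [Finset.sum_mul_sum, ← Finset.sum_product', Finset.univ_product_univ]
  let e : (Fin k → Equiv.Perm (Fin n)) × (Fin k → Fin (n + 1)) ≃ (Fin k → Equiv.Perm (Fin (n + 1))) :=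
    ((Equiv.prodComm _ _).trans (Equiv.arrowProdEquivProdArrow (Fin k) (fun _ => Fin (n + 1))
      (fun _ => Equiv.Perm (Fin n))).symm).trans
      (Equiv.arrowCongr (Equiv.refl _) (Equiv.ofBijective _ (insP_bij n)))
  rw [← Equiv.sum_comp e]
  refine Finset.sum_congr rfl fun q _ => ?_
  rw [← pow_add, ← count_step]
  rfl

open Polynomial in
lemma genP_one (k : ℕ) (c : ℕ → ℕ) (hc : ∀ p ≤ k, c p = 0 ∨ c p = 1) :
    genP k c 1 = X ^ (c k) := by
  unfold genP
  rw [Fintype.sum_unique]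
  congr 1
  rw [Finset.card_filter]
  have : ltrCount (default : Fin k → Equiv.Perm (Fin 1)) 0 = k := by
    unfold ltrCount
    rw [Finset.filter_true_of_mem]
    · simp
    · intro w _ i hi
      exact absurd hi (by simp)
  simp only [Fin.sum_univ_one, this]
  rcases hc k le_rfl with h | h <;> simp [h]

open Polynomial in
lemma genP_eq (k n : ℕ) (c : ℕ → ℕ) (hc : ∀ p ≤ k, c p = 0 ∨ c p = 1) (hn : 1 ≤ n) :
    genP k c n = X ^ (c k) * (C (((n - 1).factorial : ℝ) ^ k) *
      ∏ j ∈ Finset.Icc 2 n, (C (Fc k c j) * X + C (Fc k (fun p => 1 - c p) j))) := by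
  induction n, hn using Nat.le_induction with
  | base => simp [genP_one k c hc]
  | succ n hn ih =>
    obtain ⟨r, rfl⟩ := Nat.exists_eq_add_of_le' hn
    rw [genP_succ k _ (by omega) c hc, ih, Finset.prod_Icc_succ_top (a := 2) (b := r + 1) (by omega)]
    simp only [Nat.add_sub_cancel, Nat.factorial_succ]
    push_cast
    simp only [mul_pow, map_mul]
    ring

/-- Theorem 2.1 (expression for C sequential optimization numbers). -/
theorem stmt_0 (k : ℕ) (hk : 1 ≤ k) (c : ℕ → ℕ) (hc : ∀ p ≤ k, c p = 0 ∨ c p = 1)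
    (n m : ℕ) (hn : 1 ≤ n) (hm1 : 1 ≤ m) (hmn : m ≤ n) :
    (Oseq k c n (m + c k - 1) : ℝ) =
      ((n - 1).factorial : ℝ) ^ k *
        ∑ T ∈ (Finset.Icc 2 n).powersetCard (m - 1),
          (∏ j ∈ T, Fc k c j) * ∏ j ∈ Finset.Icc 2 n \ T, Fc k (fun p => 1 - c p) j := by
  rw [← genP_coeff, genP_eq k n c hc hn]
  have hm : m + c k - 1 = (m - 1) + c k := by omega
  rw [hm, Polynomial.coeff_X_pow_mul, Polynomial.coeff_C_mul, Finset.prod_add,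
    Polynomial.finsetSum_coeff]
  congr 1
  rw [Finset.powersetCard_eq_filter, Finset.sum_filter]
  refine Finset.sum_congr rfl fun T _ => ?_
  rw [Finset.prod_mul_distrib, Finset.prod_const, ← map_prod, ← map_prod, mul_assoc,
    Polynomial.coeff_C_mul, Polynomial.coeff_mul_C, Polynomial.coeff_X_pow]
  by_cases h : #T = m - 1
  · simp [h]
  · simp [h, Ne.symm h]
end

section
/- Fix an integer k ≥ 1 and C = (c_0,…,c_k) with each c_p ∈ {0,1}. For every n ≥ 1 and every integer m ≥ 0, O_C(n+1, m+1) = A_n(C)·O_C(n, m) + A_n(C′)·O_C(n, m+1), where A_n(C) = n^k·F_{n+1}(C) = Σ_{p=0}^{k} c_p · binom(k,p) · n^{k−p} (a nonnegative integer) and A_n(C′) = Σ_{p=0}^{k} (1−c_p) · binom(k,p) · n^{k−p}. -/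
open Finset

def permIns {n : ℕ} (x : Fin (n + 1) × Equiv.Perm (Fin n)) : Equiv.Perm (Fin (n + 1)) :=
  ((finSuccEquiv' (Fin.last n)).trans (Equiv.optionCongr x.2)).trans (finSuccEquiv' x.1).symm

lemma permIns_last {n : ℕ} (x : Fin (n + 1) × Equiv.Perm (Fin n)) :
    permIns x (Fin.last n) = x.1 := by
  simp [permIns]

lemma permIns_castSucc {n : ℕ} (x : Fin (n + 1) × Equiv.Perm (Fin n)) (i : Fin n) :
    permIns x i.castSucc = x.1.succAbove (x.2 i) := by
  have h : (finSuccEquiv' (Fin.last n)) i.castSucc = some i := by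
    rw [← Fin.succAbove_last_apply, finSuccEquiv'_succAbove]
  simp [permIns, h]

lemma permIns_bij (n : ℕ) : Function.Bijective (permIns (n := n)) := by
  rw [Fintype.bijective_iff_injective_and_card]
  constructor
  · intro x y h
    have h1 : x.1 = y.1 := by rw [← permIns_last x, h, permIns_last]
    refine Prod.ext h1 (Equiv.ext fun i => ?_)
    have h2 := permIns_castSucc x i
    rw [h, permIns_castSucc, h1] at h2
    exact (Fin.succAbove_right_injective h2).symm
  · simp [Fintype.card_perm, Nat.factorial_succ]

lemma ltr_castSucc {n : ℕ} (x : Fin (n + 1) × Equiv.Perm (Fin n)) (i : Fin n) :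
    IsLTRMin (permIns x) i.castSucc ↔ IsLTRMin x.2 i := by
  unfold IsLTRMin
  constructor
  · intro h j hj
    have := h j.castSucc (by simpa using hj)
    simpa [permIns_castSucc, Fin.succAbove_lt_succAbove_iff] using this
  · intro h j hj
    induction j using Fin.lastCases with
    | last => exact absurd hj (by simpa using Fin.le_last _)
    | cast j =>
      simpa [permIns_castSucc, Fin.succAbove_lt_succAbove_iff] using h j (by simpa using hj)

lemma ltr_last {n : ℕ} (x : Fin (n + 1) × Equiv.Perm (Fin n)) :
    IsLTRMin (permIns x) (Fin.last n) ↔ x.1 = 0 := by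
  unfold IsLTRMin
  rw [permIns_last]
  constructor
  · intro h
    by_contra hne
    obtain ⟨j, hj⟩ := (permIns x).surjective 0
    have hjl : j ≠ Fin.last n := by
      rintro rfl
      rw [permIns_last] at hj
      exact hne hj
    have := h j (Fin.lt_last_iff_ne_last.2 hjl)
    rw [hj] at this
    exact absurd this (Fin.not_lt_zero _)
  · intro h j hj
    rw [h, Fin.pos_iff_ne_zero]
    intro h0
    have : permIns x j = permIns x (Fin.last n) := by rw [h0, permIns_last, h]
    exact hj.ne ((permIns x).injective this)

/-- number of zero coordinates -/
def zc {n k : ℕ} (v : Fin k → Fin (n + 1)) : ℕ := (univ.filter fun w => v w = 0).card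

lemma zc_sum (n k : ℕ) (f : ℕ → ℕ) :
    ∑ v : Fin k → Fin (n + 1), f (zc v) =
      ∑ p ∈ range (k + 1), f p * k.choose p * n ^ (k - p) := by
  have hfib : ∀ S : Finset (Fin k),
      (univ.filter fun v : Fin k → Fin (n + 1) => (univ.filter fun w => v w = 0) = S).card
        = n ^ (k - S.card) := by
    intro S
    have : (univ.filter fun v : Fin k → Fin (n + 1) => (univ.filter fun w => v w = 0) = S)
        = Fintype.piFinset fun w => if w ∈ S then {0} else {0}ᶜ := by
      ext v
      simp only [mem_filter, mem_univ, true_and, Fintype.mem_piFinset, Finset.ext_iff]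
      refine forall_congr' fun w => ?_
      by_cases hw : w ∈ S <;> simp [hw]
    rw [this, Fintype.card_piFinset]
    have h2 : ∀ w : Fin k, (if w ∈ S then ({0} : Finset (Fin (n+1))) else {0}ᶜ).card
        = if w ∈ S then 1 else n := by
      intro w
      by_cases hw : w ∈ S <;> simp [hw, card_compl]
    simp only [h2]
    rw [prod_ite]
    simp only [prod_const_one, one_mul, prod_const]
    have : (univ.filter fun w => w ∉ S) = Sᶜ := by ext; simp
    rw [this, card_compl, Fintype.card_fin]
  rw [← sum_fiberwise (univ) (fun v : Fin k → Fin (n + 1) => univ.filter fun w => v w = 0)]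
  have h3 : ∀ S : Finset (Fin k),
      ∑ v ∈ univ.filter (fun v : Fin k → Fin (n + 1) => (univ.filter fun w => v w = 0) = S),
        f (zc v) = f S.card * n ^ (k - S.card) := by
    intro S
    rw [← hfib S, mul_comm, ← smul_eq_mul, ← sum_const]
    refine sum_congr rfl fun v hv => ?_
    rw [zc, (mem_filter.1 hv).2]
  simp only [h3]
  rw [← powerset_univ, sum_powerset_apply_card (fun p => f p * n ^ (k - p))]
  simp only [card_univ, Fintype.card_fin, smul_eq_mul]
  exact sum_congr rfl fun p _ => by ring

noncomputable def tupEquiv (n k : ℕ) :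
    (Fin k → Fin (n + 1)) × (Fin k → Equiv.Perm (Fin n)) ≃ (Fin k → Equiv.Perm (Fin (n + 1))) :=
  (Equiv.arrowProdEquivProdArrow (Fin k) (fun _ => Fin (n + 1))
    (fun _ => Equiv.Perm (Fin n))).symm.trans
    (Equiv.arrowCongr (Equiv.refl _) (Equiv.ofBijective _ (permIns_bij n)))

lemma tupEquiv_apply (n k : ℕ) (v : Fin k → Fin (n + 1)) (t : Fin k → Equiv.Perm (Fin n))
    (w : Fin k) : tupEquiv n k (v, t) w = permIns (v w, t w) := rfl

lemma cnt_eq (n k : ℕ) (c : ℕ → ℕ) (v : Fin k → Fin (n + 1)) (t : Fin k → Equiv.Perm (Fin n)) :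
    (univ.filter fun i : Fin (n + 1) => c (ltrCount (tupEquiv n k (v, t)) i) = 1).card =
      (univ.filter fun i : Fin n => c (ltrCount t i) = 1).card + if c (zc v) = 1 then 1 else 0 := by
  have h1 : ∀ i : Fin n, ltrCount (tupEquiv n k (v, t)) i.castSucc = ltrCount t i := by
    intro i
    simp only [ltrCount, tupEquiv_apply, ltr_castSucc]
  have h2 : ltrCount (tupEquiv n k (v, t)) (Fin.last n) = zc v := by
    simp only [ltrCount, tupEquiv_apply, ltr_last, zc]
  rw [card_filter, Fin.sum_univ_castSucc, card_filter]
  simp only [h1, h2]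

lemma zc_le {n k : ℕ} (v : Fin k → Fin (n + 1)) : zc v ≤ k := by
  simpa [zc] using card_filter_le (univ : Finset (Fin k)) (fun w => v w = 0)

/-- Theorem 2.2 (recurrence formula for C sequential optimization numbers). -/
theorem stmt_2 (k : ℕ) (hk : 1 ≤ k) (c : ℕ → ℕ) (hc : ∀ p ≤ k, c p = 0 ∨ c p = 1)
    (n m : ℕ) (hn : 1 ≤ n) :
    Oseq k c (n + 1) (m + 1) =
      (∑ p ∈ Finset.range (k + 1), c p * k.choose p * n ^ (k - p)) * Oseq k c n m +
      (∑ p ∈ Finset.range (k + 1), (1 - c p) * k.choose p * n ^ (k - p)) * Oseq k c n (m + 1) := by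
  rw [← zc_sum n k c, ← zc_sum n k (fun p => 1 - c p), sum_mul, sum_mul, ← sum_add_distrib]
  conv_lhs => rw [Oseq, card_filter, ← (tupEquiv n k).sum_comp, Fintype.sum_prod_type]
  refine sum_congr rfl fun v _ => ?_
  simp only [cnt_eq]
  rw [← card_filter]
  rcases hc _ (zc_le v) with h | h <;> simp [h, Oseq]
end

section
/- For every n ≥ 2 and every j with 2 ≤ j ≤ n, the number of permutations σ of {1,…,n} whose set of left-to-right minima positions is exactly {1, j} satisfies (j − 1) · |{such σ}| = (n − 1)!. -/
open Finset

lemma char_aux {m : ℕ} (J : Fin (m+1)) (hJ : 0 < J) (σ : Equiv.Perm (Fin (m+1))) :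
    univ.filter (IsLTRMin σ) = {0, J} ↔ σ J = 0 ∧ ∀ i, i < J → σ 0 ≤ σ i := by
  constructor
  · intro h
    have h' : ∀ i, IsLTRMin σ i ↔ i = 0 ∨ i = J := by
      intro i
      have := Finset.ext_iff.mp h i
      simpa using this
    have hJm : IsLTRMin σ J := (h' J).2 (Or.inr rfl)
    constructor
    · have h0 : IsLTRMin σ (σ.symm 0) := by
        intro i' hi'
        rw [Equiv.apply_symm_apply]
        refine Fin.pos_of_ne_zero ?_
        intro h0
        rw [← h0] at hi'
        simp at hi'
      rcases (h' _).1 h0 with h1 | h1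
      · have h2 := hJm 0 hJ
        have h3 : σ 0 = 0 := ((Equiv.symm_apply_eq σ).1 h1).symm
        rw [h3] at h2
        exact absurd h2 (Fin.not_lt_zero _)
      · rw [← h1]; simp
    · obtain ⟨k, hk, hmin⟩ := Finset.exists_min_image (Finset.Iio J) σ ⟨0, by simpa using hJ⟩
      have hkJ : k < J := by simpa using hk
      have hkm : IsLTRMin σ k := by
        intro i' hi'
        refine lt_of_le_of_ne (hmin i' (by simpa using hi'.trans hkJ)) ?_
        intro he
        exact hi'.ne' (σ.injective he)
      rcases (h' _).1 hkm with h1 | h1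
      · subst h1
        intro i hi
        exact hmin i (by simpa using hi)
      · exact absurd h1 hkJ.ne
  · rintro ⟨h1, h2⟩
    ext i
    simp only [mem_filter, mem_univ, true_and, mem_insert, mem_singleton]
    constructor
    · intro hi
      by_contra hc
      push Not at hc
      have h3 := hi 0 (Fin.pos_of_ne_zero hc.1)
      rcases lt_or_gt_of_ne hc.2 with h | h
      · exact absurd h3 (not_lt.2 (h2 i h))
      · have := hi J h
        rw [h1] at this
        exact absurd this (Fin.not_lt_zero _)
    · rintro (rfl | rfl)
      · intro i' hi'
        exact absurd hi' (Fin.not_lt_zero _)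
      · intro i' hi'
        rw [h1]
        refine Fin.pos_of_ne_zero ?_
        intro h0
        exact hi'.ne (σ.injective (h0.trans h1.symm))

lemma card_fix_aux {m : ℕ} (J : Fin (m+1)) :
    ((univ : Finset (Equiv.Perm (Fin (m+1)))).filter fun σ => σ J = 0).card = m.factorial := by
  have : (univ : Finset (Equiv.Perm (Fin m))).card = m.factorial := by
    simp [Finset.card_univ, Fintype.card_perm]
  rw [← this]
  symm
  refine Finset.card_bij
    (fun τ _ => Equiv.Perm.decomposeFin.symm (0, τ) * Equiv.swap 0 J) ?_ ?_ ?_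
  · intro τ _
    simp
  · intro a _ b _ h
    have := Equiv.Perm.decomposeFin.symm.injective (mul_right_cancel h)
    exact (Prod.mk.inj this).2
  · intro σ hσ
    have hσ' : σ J = 0 := by simpa using hσ
    refine ⟨(Equiv.Perm.decomposeFin (σ * Equiv.swap 0 J)).2, mem_univ _, ?_⟩
    have h0 : (Equiv.Perm.decomposeFin (σ * Equiv.swap 0 J)).1 = 0 := by
      have h := Equiv.Perm.decomposeFin_symm_apply_zero
        (Equiv.Perm.decomposeFin (σ * Equiv.swap 0 J)).1
        (Equiv.Perm.decomposeFin (σ * Equiv.swap 0 J)).2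
      rw [← h]
      simp [hσ']
    have h1 : ((0 : Fin (m+1)), (Equiv.Perm.decomposeFin (σ * Equiv.swap 0 J)).2)
        = Equiv.Perm.decomposeFin (σ * Equiv.swap 0 J) := Prod.ext h0.symm rfl
    rw [h1, Equiv.symm_apply_apply, mul_assoc, Equiv.swap_mul_self, mul_one]

lemma swap_lt_aux {m : ℕ} {J k i : Fin (m+1)} (hJ : 0 < J) (hk : k < J) (hi : i < J) :
    Equiv.swap 0 k i < J := by
  rw [Equiv.swap_apply_def]
  split_ifs <;> assumption

lemma main_aux {m : ℕ} (J : Fin (m+1)) (hJ : 0 < J) :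
    (J : ℕ) * ((univ : Finset (Equiv.Perm (Fin (m+1)))).filter fun σ =>
        univ.filter (IsLTRMin σ) = {0, J}).card = m.factorial := by
  rw [← card_fix_aux J]
  simp_rw [char_aux J hJ]
  have hc : (Finset.Iio J).card = (J : ℕ) := by simp
  rw [← hc, ← Finset.card_product]
  have hmin : ∀ (k : Fin (m+1)) (σ : Equiv.Perm (Fin (m+1))), k < J →
      (∀ i, i < J → σ 0 ≤ σ i) →
      ∀ i, i < J → (σ * Equiv.swap 0 k) k ≤ (σ * Equiv.swap 0 k) i := by
    intro k σ hk h i hi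
    simp only [Equiv.Perm.mul_apply, Equiv.swap_apply_right]
    exact h _ (swap_lt_aux hJ hk hi)
  refine Finset.card_bij (fun p _ => p.2 * Equiv.swap 0 p.1) ?_ ?_ ?_
  · rintro ⟨k, σ⟩ h
    simp only [mem_product, mem_Iio, mem_filter, mem_univ, true_and] at h ⊢
    rw [Equiv.Perm.mul_apply, Equiv.swap_apply_of_ne_of_ne hJ.ne' h.1.ne', h.2.1]
  · rintro ⟨k, σ⟩ h ⟨k', σ'⟩ h' he
    simp only [mem_product, mem_Iio, mem_filter, mem_univ, true_and] at h h' he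
    have h1 := hmin k σ h.1 h.2.2 k' h'.1
    have h2 := hmin k' σ' h'.1 h'.2.2 k h.1
    rw [← he] at h2
    have hk : k = k' := (σ * Equiv.swap 0 k).injective (le_antisymm h1 h2)
    subst hk
    rw [mul_right_cancel he]
  · intro τ hτ
    have hτ' : τ J = 0 := by simpa using hτ
    obtain ⟨k, hk, hm⟩ := Finset.exists_min_image (Finset.Iio J) τ ⟨0, by simpa using hJ⟩
    have hkJ : k < J := by simpa using hk
    refine ⟨(k, τ * Equiv.swap 0 k), ?_, ?_⟩
    · simp only [mem_product, mem_Iio, mem_filter, mem_univ, true_and]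
      refine ⟨hkJ, ?_, ?_⟩
      · rw [Equiv.Perm.mul_apply, Equiv.swap_apply_of_ne_of_ne hJ.ne' hkJ.ne', hτ']
      · intro i hi
        simp only [Equiv.Perm.mul_apply, Equiv.swap_apply_left]
        exact hm _ (by simpa using swap_lt_aux hJ hkJ hi)
    · simp [mul_assoc]

/-- Basis step of Theorem 2.1: the number of permutations of `{1,…,n}` whose set of
left-to-right minima positions is exactly `{1, j}` is `(n-1)!/(j-1)`. -/
theorem stmt_7 (n j : ℕ) (hn : 2 ≤ n) (hj2 : 2 ≤ j) (hjn : j ≤ n) :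
    (j - 1) * ((univ : Finset (Equiv.Perm (Fin n))).filter fun σ =>
        univ.filter (IsLTRMin σ) = {(⟨0, by omega⟩ : Fin n), ⟨j - 1, by omega⟩}).card =
      (n - 1).factorial := by
  obtain ⟨m, rfl⟩ : ∃ m, n = m + 1 := ⟨n - 1, by omega⟩
  exact main_aux (⟨j - 1, by omega⟩ : Fin (m+1)) (by rw [Fin.lt_def]; simp; omega)
end

section
/- Fix an integer k ≥ 1 and C = (c_0,…,c_k) with each c_p ∈ {0,1}. For every n ≥ 1 and every m with 1 ≤ m ≤ n, O_C(n, m + c_k − 1) ≤ (((n−1)!)^k / (m−1)!) · λ_n^{m−1} · Π_{i=1}^{n−m} F_{i+1}(C′), where λ_n = Σ_{j=2}^{n} F_j(C). -/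
open Finset

namespace Aux11

/-- insert last value `p`. -/
def ins {n : ℕ} (p : Fin (n+1)) (σ : Equiv.Perm (Fin n)) : Equiv.Perm (Fin (n+1)) :=
  ((finSuccEquiv' (Fin.last n)).trans (Equiv.optionCongr σ)).trans (finSuccEquiv' p).symm

lemma ins_last {n : ℕ} (p : Fin (n+1)) (σ : Equiv.Perm (Fin n)) : ins p σ (Fin.last n) = p := by
  simp [ins]

lemma ins_castSucc {n : ℕ} (p : Fin (n+1)) (σ : Equiv.Perm (Fin n)) (i : Fin n) :
    ins p σ i.castSucc = p.succAbove (σ i) := by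
  have : finSuccEquiv' (Fin.last n) i.castSucc = some i := by
    rw [← Fin.succAbove_last_apply, finSuccEquiv'_succAbove]
  simp [ins, this]

lemma ins_bij (n : ℕ) :
    Function.Bijective (fun x : Fin (n+1) × Equiv.Perm (Fin n) => ins x.1 x.2) := by
  rw [Fintype.bijective_iff_injective_and_card]
  constructor
  · rintro ⟨p, σ⟩ ⟨q, τ⟩ h
    simp only at h
    have hp : p = q := by rw [← ins_last p σ, h, ins_last]
    subst hp
    congr 1
    ext i
    have : p.succAbove (σ i) = p.succAbove (τ i) := by
      rw [← ins_castSucc, h, ins_castSucc]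
    rw [Fin.succAbove_right_injective this]
  · simp [Fintype.card_perm, Nat.factorial_succ]

lemma ltr_castSucc {n : ℕ} (p : Fin (n+1)) (σ : Equiv.Perm (Fin n)) (i : Fin n) :
    IsLTRMin (ins p σ) i.castSucc ↔ IsLTRMin σ i := by
  constructor
  · intro h j hj
    have := h j.castSucc (by simpa using hj)
    rwa [ins_castSucc, ins_castSucc, Fin.succAbove_lt_succAbove_iff] at this
  · intro h j hj
    induction j using Fin.lastCases with
    | last => exact absurd hj (not_lt.2 (Fin.le_last _))
    | cast j =>
      rw [ins_castSucc, ins_castSucc, Fin.succAbove_lt_succAbove_iff]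
      exact h j (by simpa using hj)

lemma ltr_last {n : ℕ} (p : Fin (n+1)) (σ : Equiv.Perm (Fin n)) :
    IsLTRMin (ins p σ) (Fin.last n) ↔ p = 0 := by
  constructor
  · intro h
    by_contra hp
    obtain ⟨j, hj⟩ := (ins p σ).surjective 0
    have hjl : j < Fin.last n := by
      rw [Fin.lt_last_iff_ne_last]
      rintro rfl
      rw [ins_last] at hj
      exact hp hj
    have := h j hjl
    rw [hj] at this
    exact absurd this (Fin.not_lt_zero _)
  · rintro rfl j hj
    induction j using Fin.lastCases with
    | last => exact absurd hj (lt_irrefl _)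
    | cast j =>
      rw [ins_castSucc, ins_last, Fin.succAbove_zero]
      exact Fin.succ_pos _

/-- number of zeros -/
def zc {n k : ℕ} (p : Fin k → Fin (n+1)) : ℕ := (univ.filter fun w => p w = 0).card

/-- count -/
def cnt {n k : ℕ} (c : ℕ → ℕ) (σs : Fin k → Equiv.Perm (Fin n)) : ℕ :=
  (univ.filter fun i : Fin n => c (ltrCount σs i) = 1).card

lemma cnt_ins {n k : ℕ} (c : ℕ → ℕ) (p : Fin k → Fin (n+1)) (σs : Fin k → Equiv.Perm (Fin n)) :
    cnt c (fun w => ins (p w) (σs w)) = cnt c σs + if c (zc p) = 1 then 1 else 0 := by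
  have h1 : ∀ i : Fin n, ltrCount (fun w => ins (p w) (σs w)) i.castSucc = ltrCount σs i := by
    intro i
    simp [ltrCount, ltr_castSucc]
  have h2 : ltrCount (fun w => ins (p w) (σs w)) (Fin.last n) = zc p := by
    simp [ltrCount, ltr_last, zc]
  unfold cnt
  rw [Finset.card_filter, Finset.card_filter, Fin.sum_univ_castSucc]
  simp only [h1, h2]

/-- good -/
def G1 (k n : ℕ) (c : ℕ → ℕ) : ℕ :=
  ((univ : Finset (Fin k → Fin (n+1))).filter fun p => c (zc p) = 1).card
/-- bad -/
def G0 (k n : ℕ) (c : ℕ → ℕ) : ℕ :=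
  ((univ : Finset (Fin k → Fin (n+1))).filter fun p => ¬ c (zc p) = 1).card

lemma Oseq_eq (k n : ℕ) (c : ℕ → ℕ) (s : ℕ) :
    Oseq k c (n+1) s = ((univ : Finset ((Fin k → Fin (n+1)) × (Fin k → Equiv.Perm (Fin n)))).filter
      fun x => cnt c x.2 + (if c (zc x.1) = 1 then 1 else 0) = s).card := by
  symm
  unfold Oseq
  have key : Function.Bijective
      (fun (x : (Fin k → Fin (n+1)) × (Fin k → Equiv.Perm (Fin n))) (w : Fin k) =>
        ins (x.1 w) (x.2 w)) :=
    ((Equiv.arrowProdEquivProdArrow (Fin k) (fun _ => Fin (n+1)) (fun _ => Equiv.Perm (Fin n))).symm.trans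
      (Equiv.arrowCongr (Equiv.refl _) (Equiv.ofBijective _ (ins_bij n)))).bijective
  refine Finset.card_bij (fun x _ => fun w => ins (x.1 w) (x.2 w)) ?_ ?_ ?_
  · intro x hx
    rw [mem_filter] at hx ⊢
    refine ⟨mem_univ _, ?_⟩
    rw [← hx.2, ← cnt_ins]
    rfl
  · intro x _ y _ h
    exact key.1 h
  · intro y hy
    obtain ⟨x, rfl⟩ := key.2 y
    refine ⟨x, ?_, rfl⟩
    rw [mem_filter] at hy ⊢
    refine ⟨mem_univ _, ?_⟩
    rw [← hy.2, ← cnt_ins]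
    rfl

lemma Oseq_rec (k n : ℕ) (c : ℕ → ℕ) (s : ℕ) :
    Oseq k c (n+1) (s+1) = G1 k n c * Oseq k c n s + G0 k n c * Oseq k c n (s+1) := by
  rw [Oseq_eq]
  unfold G1 G0 Oseq
  rw [← card_product, ← card_product, ← card_union_of_disjoint]
  · congr 1
    ext ⟨p, τ⟩
    rw [mem_union, mem_filter]
    by_cases h : c (zc p) = 1 <;> simp [h, cnt]
  · rw [Finset.disjoint_left]
    rintro ⟨p, τ⟩ h1 h2
    simp only [mem_product, mem_filter] at h1 h2
    exact h2.1.2 h1.1.2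

lemma Oseq_rec0 (k n : ℕ) (c : ℕ → ℕ) :
    Oseq k c (n+1) 0 = G0 k n c * Oseq k c n 0 := by
  rw [Oseq_eq]
  unfold G0 Oseq
  rw [← card_product]
  congr 1
  ext ⟨p, τ⟩
  by_cases h : c (zc p) = 1 <;> simp [h, cnt]

lemma Oseq_one (k : ℕ) (c : ℕ → ℕ) (s : ℕ) :
    Oseq k c 1 s = if (if c k = 1 then 1 else 0) = s then 1 else 0 := by
  have h : ∀ (σs : Fin k → Equiv.Perm (Fin 1)) (i : Fin 1), ltrCount σs i = k := by
    intro σs i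
    have : ∀ w, IsLTRMin (σs w) i := by
      intro w j hj
      exact absurd hj (by rw [Subsingleton.elim i j]; exact lt_irrefl _)
    simp [ltrCount, this]
  unfold Oseq
  simp only [h]
  rw [Finset.card_filter]
  by_cases h : c k = 1 <;> simp [h]

lemma fiber_card (k n : ℕ) (S : Finset (Fin k)) :
    ((univ : Finset (Fin k → Fin (n+1))).filter fun p => (univ.filter fun w => p w = 0) = S).card
      = n ^ (k - S.card) := by
  have : ((univ : Finset (Fin k → Fin (n+1))).filter fun p => (univ.filter fun w => p w = 0) = S)
      = Fintype.piFinset (fun w => if w ∈ S then ({0} : Finset (Fin (n+1))) else {0}ᶜ) := by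
    ext p
    simp only [mem_filter, mem_univ, true_and, Fintype.mem_piFinset, Finset.ext_iff]
    refine forall_congr' fun w => ?_
    by_cases hw : w ∈ S <;> simp [hw]
  rw [this, Fintype.card_piFinset]
  have h2 : ∀ w, (if w ∈ S then ({0} : Finset (Fin (n+1))) else {0}ᶜ).card
      = if w ∈ S then 1 else n := by
    intro w
    split_ifs <;> simp [card_compl]
  simp only [h2]
  rw [Finset.prod_ite]
  simp only [prod_const, one_pow, one_mul]
  congr 1
  rw [Finset.filter_not, card_sdiff_of_subset (filter_subset _ _)]
  simp

lemma sum_zc (k n : ℕ) (f : ℕ → ℝ) :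
    ∑ p : Fin k → Fin (n+1), f (zc p) =
      ∑ l ∈ range (k+1), f l * k.choose l * (n:ℝ) ^ (k - l) := by
  rw [← Finset.sum_fiberwise_of_maps_to (s := univ) (t := (univ : Finset (Fin k)).powerset)
    (g := fun p : Fin k → Fin (n+1) => (univ.filter fun w => p w = 0)) (by simp)]
  have : ∀ S ∈ (univ : Finset (Fin k)).powerset,
      ∑ p ∈ (univ : Finset (Fin k → Fin (n+1))).filter (fun p => (univ.filter fun w => p w = 0) = S),
        f (zc p) = f S.card * (n:ℝ) ^ (k - S.card) := by
    intro S _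
    rw [Finset.sum_congr rfl (g := fun _ => f S.card)]
    · rw [sum_const, fiber_card]
      simp [mul_comm]
    · intro p hp
      rw [mem_filter] at hp
      rw [zc, hp.2]
  rw [Finset.sum_congr rfl this,
    Finset.sum_powerset_apply_card (fun l => f l * (n:ℝ) ^ (k - l))]
  simp only [card_univ, Fintype.card_fin, nsmul_eq_mul]
  refine sum_congr rfl fun l _ => by ring

lemma sum_Fc (k n : ℕ) (hn : 1 ≤ n) (c : ℕ → ℕ) :
    ∑ l ∈ range (k+1), (c l : ℝ) * k.choose l * (n:ℝ) ^ (k - l) = (n:ℝ)^k * Fc k c (n+1) := by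
  unfold Fc
  rw [mul_sum]
  refine sum_congr rfl fun l hl => ?_
  have hl : l ≤ k := by simpa [Nat.lt_succ_iff] using hl
  have hn0 : (n:ℝ) ≠ 0 := by positivity
  rw [pow_sub₀ _ hn0 hl]
  simp only [Nat.add_sub_cancel]
  field_simp

lemma zc_le {k n : ℕ} (p : Fin k → Fin (n+1)) : zc p ≤ k := by
  unfold zc
  exact (card_filter_le _ _).trans (by simp)

lemma G1_eq (k n : ℕ) (hn : 1 ≤ n) (c : ℕ → ℕ) (hc : ∀ p ≤ k, c p = 0 ∨ c p = 1) :
    (G1 k n c : ℝ) = (n:ℝ)^k * Fc k c (n+1) := by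
  rw [← sum_Fc k n hn, ← sum_zc k n (fun l => (c l : ℝ)), G1, Finset.card_filter, Nat.cast_sum]
  refine sum_congr rfl fun p _ => ?_
  rcases hc _ (zc_le p) with h | h <;> simp [h]

lemma G0_eq (k n : ℕ) (hn : 1 ≤ n) (c : ℕ → ℕ) (hc : ∀ p ≤ k, c p = 0 ∨ c p = 1) :
    (G0 k n c : ℝ) = (n:ℝ)^k * Fc k (fun p => 1 - c p) (n+1) := by
  rw [← sum_Fc k n hn, ← sum_zc k n (fun l => ((1 - c l : ℕ) : ℝ)), G0, Finset.card_filter,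
    Nat.cast_sum]
  refine sum_congr rfl fun p _ => ?_
  rcases hc _ (zc_le p) with h | h <;> simp [h]

lemma Fc_nonneg (k : ℕ) (c : ℕ → ℕ) (j : ℕ) : 0 ≤ Fc k c j := by
  unfold Fc
  positivity

lemma Fc_anti (k : ℕ) (c : ℕ → ℕ) (i j : ℕ) (hi : 1 ≤ i) (hij : i ≤ j) :
    Fc k c (j+1) ≤ Fc k c (i+1) := by
  unfold Fc
  simp only [Nat.add_sub_cancel]
  have : (0:ℝ) < i := by exact_mod_cast hi
  gcongr

lemma bern (x y : ℝ) (hx : 0 ≤ x) (hy : 0 ≤ y) (r : ℕ) :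
    x ^ (r+1) + (r+1) * y * x ^ r ≤ (x + y)^(r+1) := by
  induction r with
  | zero => simp
  | succ r ih =>
    rw [pow_succ (x+y)]
    refine le_trans ?_ (mul_le_mul_of_nonneg_right ih (by positivity))
    push_cast
    have : 0 ≤ (r+1) * y^2 * x^r := by positivity
    ring_nf at this ⊢
    linarith

lemma low_zero (k : ℕ) (c : ℕ → ℕ) (h : c k = 1) (n : ℕ) : Oseq k c (n+1) 0 = 0 := by
  induction n with
  | zero => simp [Oseq_one, h]
  | succ n ih => rw [Oseq_rec0, ih, mul_zero]

/-- recurrence shifted. -/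
lemma rec_shift (k : ℕ) (c : ℕ → ℕ) (hc : ∀ p ≤ k, c p = 0 ∨ c p = 1) (n : ℕ) :
    Oseq k c (n+2) (0 + c k) = G0 k (n+1) c * Oseq k c (n+1) (0 + c k) ∧
    ∀ r, Oseq k c (n+2) (r + 1 + c k) = G1 k (n+1) c * Oseq k c (n+1) (r + c k)
      + G0 k (n+1) c * Oseq k c (n+1) (r + 1 + c k) := by
  rcases hc k le_rfl with h | h
  · rw [h]
    exact ⟨Oseq_rec0 _ _ _, fun r => Oseq_rec _ _ _ _⟩
  · rw [h]
    refine ⟨?_, fun r => Oseq_rec _ _ _ _⟩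
    rw [Oseq_rec, low_zero k c h]
    simp

lemma high_zero (k : ℕ) (c : ℕ → ℕ) (hc : ∀ p ≤ k, c p = 0 ∨ c p = 1) (n : ℕ) :
    ∀ r, n < r → Oseq k c (n+1) (r + c k) = 0 := by
  induction n with
  | zero =>
    intro r hr
    rw [Oseq_one]
    rcases hc k le_rfl with h | h <;> simp [h] <;> omega
  | succ n ih =>
    intro r hr
    obtain ⟨r, rfl⟩ : ∃ q, r = q + 1 := ⟨r - 1, by omega⟩
    rw [(rec_shift k c hc n).2, ih r (by omega), ih (r+1) (by omega)]
    simp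

set_option maxHeartbeats 1000000 in
lemma main (k : ℕ) (c : ℕ → ℕ) (hc : ∀ p ≤ k, c p = 0 ∨ c p = 1) (n : ℕ) :
    ∀ r, r ≤ n → (Oseq k c (n+1) (r + c k) : ℝ) ≤
      (n.factorial : ℝ) ^ k / (r.factorial : ℝ) *
        (∑ j ∈ Finset.Icc 2 (n+1), Fc k c j) ^ r *
        ∏ i ∈ Finset.Icc 1 (n - r), Fc k (fun p => 1 - c p) (i + 1) := by
  induction n with
  | zero =>
    intro r hr
    obtain rfl : r = 0 := by omega
    rw [Oseq_one]
    rcases hc k le_rfl with h | h <;> simp [h]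
  | succ n ih =>
    have hG1 := G1_eq k (n+1) (by omega) c hc
    have hG0 := G0_eq k (n+1) (by omega) c hc
    have hA : 0 ≤ Fc k c (n+1+1) := Fc_nonneg _ _ _
    have hB : 0 ≤ Fc k (fun p => 1 - c p) (n+1+1) := Fc_nonneg _ _ _
    have hL : 0 ≤ ∑ j ∈ Finset.Icc 2 (n+1), Fc k c j := sum_nonneg fun _ _ => Fc_nonneg _ _ _
    have hP : ∀ t, 0 ≤ ∏ i ∈ Finset.Icc 1 t, Fc k (fun p => 1 - c p) (i + 1) :=
      fun t => prod_nonneg fun _ _ => Fc_nonneg _ _ _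
    have hf : ((n+1).factorial : ℝ)^k = ((n+1 : ℕ):ℝ)^k * (n.factorial : ℝ)^k := by
      rw [← mul_pow, Nat.factorial_succ, Nat.cast_mul]
    intro r hr
    rw [Finset.sum_Icc_succ_top (by omega : 2 ≤ n+1+1)]
    rcases r with _ | r
    · rw [(rec_shift k c hc n).1]
      push_cast [hG0]
      have := ih 0 (by omega)
      simp only [Nat.factorial_zero, Nat.cast_one, div_one, pow_zero, mul_one, Nat.sub_zero] at this ⊢
      rw [Finset.prod_Icc_succ_top (by omega : 1 ≤ n+1), hf]
      calc _ ≤ _ := mul_le_mul_of_nonneg_left this (by positivity)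
        _ = _ := by push_cast; ring
    · rw [(rec_shift k c hc n).2, Nat.cast_add, Nat.cast_mul, Nat.cast_mul, hG1, hG0, hf]
      have e1 : n + 1 - (r+1) = n - r := by omega
      rw [e1]
      have i1 := ih r (by omega)
      have i2 : Fc k (fun p => 1 - c p) (n+1+1) * (Oseq k c (n+1) (r + 1 + c k) : ℝ) ≤
          (n.factorial : ℝ) ^ k / ((r+1).factorial : ℝ) *
        (∑ j ∈ Finset.Icc 2 (n+1), Fc k c j) ^ (r+1) *
        ∏ i ∈ Finset.Icc 1 (n - r), Fc k (fun p => 1 - c p) (i + 1) := by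
        have hQ := hP (n-r)
        rcases Nat.lt_or_ge n (r+1) with h | h
        · rw [high_zero k c hc n _ h, Nat.cast_zero, mul_zero]
          exact mul_nonneg (mul_nonneg (div_nonneg (pow_nonneg (Nat.cast_nonneg _) _)
            (Nat.cast_nonneg _)) (pow_nonneg hL _)) hQ
        · have i2 := ih (r+1) h
          have e2 : n - r = n - (r+1) + 1 := by omega
          have hm := Fc_anti k (fun p => 1 - c p) (n - (r+1) + 1) (n+1) (by omega) (by omega)
          have hQ' := hP (n-(r+1))
          rw [e2, Finset.prod_Icc_succ_top (by omega)]
          refine (mul_le_mul hm i2 (Nat.cast_nonneg _) (Fc_nonneg _ _ _)).trans (le_of_eq ?_)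
          ring
      have hb := bern _ _ hL hA r
      have hQ := hP (n-r)
      generalize (∏ i ∈ Finset.Icc 1 (n - r), Fc k (fun p => 1 - c p) (i + 1)) = Q at *
      generalize (∑ j ∈ Finset.Icc 2 (n+1), Fc k c j) = L at *
      generalize Fc k (fun p => 1 - c p) (n+1+1) = B at *
      generalize Fc k c (n+1+1) = A at *
      have hr0 : (0:ℝ) < (r.factorial : ℝ) := by positivity
      have hrf : ((r+1).factorial : ℝ) = (r+1) * r.factorial := by
        rw [Nat.factorial_succ]; push_cast; ring
      rw [hrf] at i2 ⊢
      have hN : (0:ℝ) ≤ ((n+1 : ℕ):ℝ)^k := by positivity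
      have hM : (0:ℝ) ≤ (n.factorial:ℝ)^k := by positivity
      generalize ((n+1 : ℕ):ℝ)^k = N at *
      generalize (n.factorial:ℝ)^k = M at *
      calc N * A * (Oseq k c (n+1) (r + c k) : ℝ) + N * B * (Oseq k c (n+1) (r + 1 + c k) : ℝ)
          = N * (A * (Oseq k c (n+1) (r + c k) : ℝ) + B * (Oseq k c (n+1) (r + 1 + c k) : ℝ)) := by
            ring
        _ ≤ N * (A * (M / r.factorial * L ^ r * Q) + M / ((r+1) * r.factorial) * L^(r+1) * Q) := by
            gcongr
        _ = N * M / ((r+1) * r.factorial) * (L^(r+1) + (r+1) * A * L^r) * Q := by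
            field_simp
            ring
        _ ≤ _ := by gcongr

end Aux11

/-- Theorem 2.3 (upper bound):
`O_C(n, m + c_k - 1) ≤ ((n-1)!)^k/(m-1)! · λ_n^{m-1} · ∏_{i=1}^{n-m} F_{i+1}(C')`
where `λ_n = ∑_{j=2}^n F_j(C)`. -/
theorem stmt_11 (k : ℕ) (hk : 1 ≤ k) (c : ℕ → ℕ) (hc : ∀ p ≤ k, c p = 0 ∨ c p = 1)
    (n m : ℕ) (hn : 1 ≤ n) (hm1 : 1 ≤ m) (hmn : m ≤ n) :
    (Oseq k c n (m + c k - 1) : ℝ) ≤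
      ((n - 1).factorial : ℝ) ^ k / ((m - 1).factorial : ℝ) *
        (∑ j ∈ Finset.Icc 2 n, Fc k c j) ^ (m - 1) *
        ∏ i ∈ Finset.Icc 1 (n - m), Fc k (fun p => 1 - c p) (i + 1) := by
  obtain ⟨n, rfl⟩ : ∃ q, n = q + 1 := ⟨n - 1, by omega⟩
  obtain ⟨m, rfl⟩ : ∃ q, m = q + 1 := ⟨m - 1, by omega⟩
  have := Aux11.main k c hc n m (by omega)
  have e : m + 1 + c k - 1 = m + c k := by omega
  have e2 : n + 1 - (m + 1) = n - m := by omega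
  rw [e, e2]
  exact this
end

section
/- Fix an integer k ≥ 1 and C = (c_0,…,c_k) with each c_p ∈ {0,1}, and let λ = Σ_{j=2}^{n} F_j(C). For every n ≥ 1, (1/(n!)^k) · Σ_{m=1}^{n} (((n−1)!)^k / (m−1)!) · λ^{m−1} · Π_{i=1}^{n−m} F_{i+1}(C′) ≤ e^{λ}. -/
open Finset

lemma Fc_nonneg_aux (k : ℕ) (c : ℕ → ℕ) (j : ℕ) : 0 ≤ Fc k c j := by
  unfold Fc
  positivity

lemma Fc_le_aux (k : ℕ) (c : ℕ → ℕ) (i : ℕ) (hi : 1 ≤ i) :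
    Fc k (fun p => 1 - c p) (i + 1) ≤ (((i : ℝ) + 1) / i) ^ k := by
  have hi' : (0 : ℝ) < i := by exact_mod_cast hi
  have h : (((i : ℝ) + 1) / i) ^ k = (1 / (i : ℝ) + 1) ^ k := by
    congr 1
    field_simp
    ring
  rw [h, add_pow]
  unfold Fc
  apply Finset.sum_le_sum
  intro p _
  have h1 : ((1 - c p : ℕ) : ℝ) ≤ 1 := by exact_mod_cast Nat.sub_le 1 (c p)
  simp only [Nat.add_sub_cancel, one_pow, mul_one, one_div, inv_pow]
  rw [div_eq_mul_inv, mul_comm (((i : ℝ) ^ p)⁻¹)]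
  apply mul_le_mul_of_nonneg_right _ (by positivity)
  exact mul_le_of_le_one_left (by positivity) h1

lemma prod_le_aux (k : ℕ) (c : ℕ → ℕ) (r : ℕ) :
    ∏ i ∈ Finset.Icc 1 r, Fc k (fun p => 1 - c p) (i + 1) ≤ ((r : ℝ) + 1) ^ k := by
  induction r with
  | zero => simp
  | succ r ih =>
    rw [Finset.prod_Icc_succ_top (by omega)]
    refine (mul_le_mul ih (Fc_le_aux k c (r + 1) (by omega)) (Fc_nonneg_aux _ _ _)
      (by positivity)).trans (le_of_eq ?_)
    rw [← mul_pow]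
    congr 1
    push_cast
    field_simp

/-- Theorem 2.5 (ratio bound):
`(1/(n!)^k) ∑_{m=1}^n ((n-1)!)^k/(m-1)! · λ^{m-1} · ∏_{i=1}^{n-m} F_{i+1}(C') ≤ e^λ`. -/
theorem stmt_14 (k : ℕ) (hk : 1 ≤ k) (c : ℕ → ℕ) (hc : ∀ p ≤ k, c p = 0 ∨ c p = 1)
    (n : ℕ) (hn : 1 ≤ n) :
    (1 / ((n.factorial : ℝ)) ^ k) *
        ∑ m ∈ Finset.Icc 1 n,
          ((n - 1).factorial : ℝ) ^ k / ((m - 1).factorial : ℝ) *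
            (∑ j ∈ Finset.Icc 2 n, Fc k c j) ^ (m - 1) *
            ∏ i ∈ Finset.Icc 1 (n - m), Fc k (fun p => 1 - c p) (i + 1) ≤
      Real.exp (∑ j ∈ Finset.Icc 2 n, Fc k c j) := by
  set L := ∑ j ∈ Finset.Icc 2 n, Fc k c j with hL
  have hL0 : 0 ≤ L := Finset.sum_nonneg fun j _ => Fc_nonneg_aux k c j
  have hf : (n.factorial : ℝ) = n * ((n - 1).factorial : ℝ) := by
    exact_mod_cast (Nat.mul_factorial_pred (by omega)).symm
  have hn0 : (0 : ℝ) < n := by exact_mod_cast hn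
  have hg : (0 : ℝ) < ((n - 1).factorial : ℝ) := by exact_mod_cast Nat.factorial_pos _
  refine le_trans ?_ (Real.sum_le_exp_of_nonneg hL0 n)
  have hre : ∑ i ∈ Finset.range n, L ^ i / (i.factorial : ℝ)
      = ∑ m ∈ Finset.Icc 1 n, L ^ (m - 1) / ((m - 1).factorial : ℝ) := by
    rw [Finset.range_eq_Ico, Finset.sum_Ico_eq_sum_range]
    have : Finset.Icc 1 n = Finset.Ico 1 (n + 1) := by ext; simp only [Finset.mem_Icc, Finset.mem_Ico]; omega
    rw [this, Finset.sum_Ico_eq_sum_range]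
    simp
  rw [hre, Finset.mul_sum]
  apply Finset.sum_le_sum
  intro m hm
  rw [Finset.mem_Icc] at hm
  have hP : ∏ i ∈ Finset.Icc 1 (n - m), Fc k (fun p => 1 - c p) (i + 1) ≤ (n : ℝ) ^ k := by
    refine (prod_le_aux k c (n - m)).trans ?_
    apply pow_le_pow_left₀ (by positivity)
    have : n - m + 1 ≤ n := by omega
    exact_mod_cast this
  have hm0 : (0 : ℝ) < ((m - 1).factorial : ℝ) := by exact_mod_cast Nat.factorial_pos _
  calc _ ≤ (1 / (n.factorial : ℝ) ^ k) * (((n - 1).factorial : ℝ) ^ k / ((m - 1).factorial : ℝ) *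
            L ^ (m - 1) * (n : ℝ) ^ k) := by gcongr
    _ = L ^ (m - 1) / ((m - 1).factorial : ℝ) := by
      rw [hf, mul_pow]
      field_simp
end
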